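/- arXiv:math/0410246 — 2 statements merged into one kernel-verified Lean document; each statement's English description precedes it below -/
import Mathlib

section
/- There exists an admissible pair; that is, there exist positive integers N and T₀ such that for every integer τ with |τ| ≥ T₀ and τ ≡ 1 (mod a_1⋯a_{n-1}) for which the Galois group of f(τ,x) over ℚ is isomorphic to S_n and |disc(K_{a(τ)})| > |τ|^{2/(n+2)}, the subgroup of the unit group of the ring of integers of K_{a(τ)} generated by −1 and ξ−a_1, …, ξ−a_{n-1} has finite index at most N. -/
open Polynomial NumberField

set_option synthInstance.maxHeartbeats 1000000
set_option maxHeartbeats 1000000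

/-- The main polynomial
`f(t,x) = (x−a_1)⋯(x−a_{n-1})·(x − (−1)^{n-1}(t^ℓ−1)/(a_1⋯a_{n-1})) − 1`,
viewed as a polynomial in `x` over `ℚ(t)`. -/
noncomputable def mainPoly (n ℓ : ℕ) (a : Fin (n - 1) → ℤ) : Polynomial (RatFunc ℚ) :=
  (∏ i, (X - C ((a i : ℤ) : RatFunc ℚ))) *
    (X - C ((-1) ^ (n - 1) * (RatFunc.X ^ ℓ - 1) / (((∏ i, a i : ℤ) : RatFunc ℚ)))) - 1

/-- The specialization `f(0,x) ∈ ℚ[x]`. -/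
noncomputable def mainPolyZero (n ℓ : ℕ) (a : Fin (n - 1) → ℤ) : Polynomial ℚ :=
  (∏ i, (X - C ((a i : ℤ) : ℚ))) *
    (X - C ((-1) ^ (n - 1) * ((0 : ℚ) ^ ℓ - 1) / (((∏ i, a i : ℤ) : ℚ)))) - 1

/-- `a(τ) = (−1)^{n-1}(τ^ℓ−1)/(a_1⋯a_{n-1})`, an integer whenever
`τ ≡ 1 (mod a_1⋯a_{n-1})`. -/
noncomputable def aTau (n ℓ : ℕ) (a : Fin (n - 1) → ℤ) (τ : ℤ) : ℤ :=
  (-1) ^ (n - 1) * ((τ ^ ℓ - 1) / ∏ i, a i)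

/-- The specialization `f(τ,x)`, viewed in `ℚ[x]`. -/
noncomputable def specPolyQ (n ℓ : ℕ) (a : Fin (n - 1) → ℤ) (τ : ℤ) : Polynomial ℚ :=
  (∏ i, (X - C ((a i : ℤ) : ℚ))) * (X - C ((aTau n ℓ a τ : ℤ) : ℚ)) - 1

/-- `ℚ[x]/(p)` is a number field when `p` is irreducible. -/
noncomputable instance (p : Polynomial ℚ) [h : Fact (Irreducible p)] :
    NumberField (AdjoinRoot p) := by
  haveI : CharZero (AdjoinRoot p) :=
    charZero_of_injective_algebraMap (algebraMap ℚ (AdjoinRoot p)).injective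
  haveI : FiniteDimensional ℚ (AdjoinRoot p) :=
    Module.Finite.of_basis (AdjoinRoot.powerBasis h.out.ne_zero).basis
  exact ⟨⟩

/-- The subgroup of the unit group of the ring of integers of
`K_{a(τ)} = ℚ[x]/(f(τ,x))` generated by `−1` and the ABC-units
`ξ−a_1, …, ξ−a_{n-1}`. -/
noncomputable def abcUnitSubgroup (n ℓ : ℕ) (a : Fin (n - 1) → ℤ) (τ : ℤ)
    [Fact (Irreducible (specPolyQ n ℓ a τ))] :
    Subgroup ((𝓞 (AdjoinRoot (specPolyQ n ℓ a τ)))ˣ) :=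
  Subgroup.closure {u : (𝓞 (AdjoinRoot (specPolyQ n ℓ a τ)))ˣ |
    algebraMap (𝓞 (AdjoinRoot (specPolyQ n ℓ a τ)))
      (AdjoinRoot (specPolyQ n ℓ a τ)) ↑u = -1 ∨
    ∃ i, algebraMap (𝓞 (AdjoinRoot (specPolyQ n ℓ a τ)))
      (AdjoinRoot (specPolyQ n ℓ a τ)) ↑u =
        AdjoinRoot.root (specPolyQ n ℓ a τ) - (a i : AdjoinRoot (specPolyQ n ℓ a τ))}

/-- A pair `(N, T₀)` of positive integers is *admissible* if for every integer `τ`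
with `|τ| ≥ T₀`, `τ ≡ 1 (mod a_1⋯a_{n-1})`, such that the Galois group of `f(τ,x)`
over `ℚ` is `S_n` and `|disc K_{a(τ)}| > |τ|^{2/(n+2)}`, the subgroup of the units
generated by `−1` and the ABC-units has finite index at most `N`. -/
def Admissible (n ℓ : ℕ) (a : Fin (n - 1) → ℤ) (N T₀ : ℕ) : Prop :=
  0 < N ∧ 0 < T₀ ∧
    ∀ τ : ℤ, (T₀ : ℤ) ≤ |τ| → ((∏ i, a i) ∣ (τ - 1)) →
      Nonempty ((specPolyQ n ℓ a τ).Gal ≃* Equiv.Perm (Fin n)) →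
      ∀ [Fact (Irreducible (specPolyQ n ℓ a τ))],
        |(NumberField.discr (AdjoinRoot (specPolyQ n ℓ a τ)) : ℝ)| >
            |(τ : ℝ)| ^ ((2 : ℝ) / ((n : ℝ) + 2)) →
          (abcUnitSubgroup n ℓ a τ).index ≠ 0 ∧ (abcUnitSubgroup n ℓ a τ).index ≤ N

/-- An integer `τ` is *suitable* with respect to an admissible pair `(N, T₀)`. -/
def Suitable (n ℓ : ℕ) (a : Fin (n - 1) → ℤ) (N T₀ : ℕ) (τ : ℤ) : Prop :=
  (T₀ : ℤ) ≤ |τ| ∧ ((∏ i, a i) ∣ (τ - 1)) ∧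
    (∀ Dz : ℤ, (Dz : ℚ) = (∏ i, ((a i : ℤ) : ℚ)) *
        ((mainPolyZero n ℓ a).derivative.eval 0) → Int.gcd τ Dz = 1) ∧
    Nonempty ((specPolyQ n ℓ a τ).Gal ≃* Equiv.Perm (Fin n)) ∧
    ∀ [Fact (Irreducible (specPolyQ n ℓ a τ))],
      |(NumberField.discr (AdjoinRoot (specPolyQ n ℓ a τ)) : ℝ)| >
          |(τ : ℝ)| ^ ((2 : ℝ) / ((n : ℝ) + 2)) ∧
      ∀ (ν : ℕ) (νs : Fin (n - 1) → ℕ), 1 ≤ ν → ν ≤ N → (∀ i, νs i < ν * ℓ) →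
        ∀ ζ : AlgebraicClosure (AdjoinRoot (specPolyQ n ℓ a τ)),
          ζ ^ (ℓ * ν) =
            algebraMap (AdjoinRoot (specPolyQ n ℓ a τ))
                (AlgebraicClosure (AdjoinRoot (specPolyQ n ℓ a τ)))
                (AdjoinRoot.root (specPolyQ n ℓ a τ)) ^ ν *
              ∏ i, (algebraMap (AdjoinRoot (specPolyQ n ℓ a τ))
                  (AlgebraicClosure (AdjoinRoot (specPolyQ n ℓ a τ)))
                  (AdjoinRoot.root (specPolyQ n ℓ a τ)) -
                (a i : AlgebraicClosure (AdjoinRoot (specPolyQ n ℓ a τ)))) ^ (νs i) →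
          ℓ ≤ Module.finrank (AdjoinRoot (specPolyQ n ℓ a τ))
            (IntermediateField.adjoin (AdjoinRoot (specPolyQ n ℓ a τ)) {ζ})


lemma auxA {K : Type*} [Field K] [NumberField K] (w : 𝓞 K) (n : ℕ) (hn : Module.finrank ℚ K = n)
    (hinj : Function.Injective fun σ : K →+* ℂ => σ w) (H : ℝ)
    (hb : ∀ σ : K →+* ℂ, ‖σ w‖ ≤ H) (hH : 1 ≤ 2 * H) :
    |(discr K : ℝ)| ≤ (2 * H) ^ (2 * n ^ 2) := by
  classical
  have hcard : Fintype.card (K →ₐ[ℚ] ℂ) = n := by rw [AlgHom.card, hn]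
  let e : Fin n ≃ (K →ₐ[ℚ] ℂ) := (Fintype.equivFinOfCardEq hcard).symm
  have hι : Fintype.card (Module.Free.ChooseBasisIndex ℤ (𝓞 K)) = n := by
    rw [← Module.finrank_eq_card_basis (integralBasis K), hn]
  let r := Fintype.equivFinOfCardEq hι
  let b := (integralBasis K).reindex r
  let c : Fin n → K := fun i => (w : K) ^ (i : ℕ)
  let P0 : Matrix (Fin n) (Fin n) ℤ := fun i j => ((RingOfIntegers.basis K).reindex r).repr (w ^ (j : ℕ)) i
  have hP : b.toMatrix c = P0.map (Int.cast : ℤ → ℚ) := by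
    ext i j
    simp only [Module.Basis.toMatrix_apply, b, c, P0, Matrix.map_apply, Module.Basis.repr_reindex_apply]
    have := integralBasis_repr_apply K (w ^ (j : ℕ)) (r.symm i)
    rw [map_pow] at this
    exact this
  have h1 : Algebra.discr ℚ c = (P0.det : ℚ) ^ 2 * (discr K : ℚ) := by
    have := Algebra.discr_of_matrix_vecMul (A := ℚ) b (b.toMatrix c)
    rw [Module.Basis.toMatrix_map_vecMul] at this
    rw [this, coe_discr]
    congr 1
    · rw [hP]
      congr 1
      exact (Int.cast_det P0).symm
    · simp only [b, Module.Basis.coe_reindex]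
      exact Algebra.discr_reindex ℚ (integralBasis K) r
  have h2 := Algebra.discr_eq_det_embeddingsMatrixReindex_pow_two ℚ ℂ c e
  have h3 : (Algebra.embeddingsMatrixReindex ℚ ℂ c e) = (Matrix.vandermonde (fun i => e i w)).transpose := by
    ext i j
    simp [Algebra.embeddingsMatrixReindex, Algebra.embeddingsMatrix, c, Matrix.vandermonde_apply]
  rw [h3, Matrix.det_transpose] at h2
  have hne : (Matrix.vandermonde (fun i => e i w)).det ≠ 0 := by
    rw [Matrix.det_vandermonde_ne_zero_iff]
    intro i j hij
    have : (e i : K →+* ℂ) = (e j : K →+* ℂ) := hinj hij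
    apply e.injective
    ext x
    exact congrArg (fun f : K →+* ℂ => f x) this
  have hnorm : ‖(Matrix.vandermonde (fun i => e i w)).det‖ ≤ (2 * H) ^ (n ^ 2) := by
    rw [Matrix.det_vandermonde, norm_prod]
    calc _ ≤ ∏ i : Fin n, (2 * H) ^ n := by
            refine Finset.prod_le_prod (fun _ _ => norm_nonneg _) fun i _ => ?_
            rw [norm_prod]
            calc _ ≤ ∏ j ∈ Finset.Ioi i, (2 * H) := by
                    refine Finset.prod_le_prod (fun _ _ => norm_nonneg _) fun j _ => ?_
                    have := norm_sub_le (e j w) (e i w)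
                    have h1 := hb (e j); have h2 := hb (e i)
                    simp only [RingHom.coe_coe] at h1 h2
                    linarith
              _ = (2 * H) ^ (Finset.Ioi i).card := by simp
              _ ≤ _ := pow_le_pow_right₀ hH (by
                  simpa using Finset.card_le_univ (Finset.Ioi i))
      _ = _ := by simp [← pow_mul, sq]
  have hdet : P0.det ≠ 0 := by
    intro h
    rw [h1, h] at h2
    simp at h2
    exact hne (by simpa using h2.symm)
  have h4 : ((P0.det : ℝ) ^ 2 * |(discr K : ℝ)|) = ‖(Matrix.vandermonde (fun i => e i w)).det‖ ^ 2 := by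
    rw [← norm_pow, ← h2, h1]
    simp
  have h5 : (1 : ℝ) ≤ (P0.det : ℝ) ^ 2 := by
    have : (1 : ℤ) ≤ P0.det ^ 2 := by have := sq_pos_of_ne_zero hdet; omega
    exact_mod_cast this
  calc |(discr K : ℝ)| ≤ (P0.det : ℝ) ^ 2 * |(discr K : ℝ)| := le_mul_of_one_le_left (abs_nonneg _) h5
    _ ≤ ((2 * H) ^ (n ^ 2)) ^ 2 := by rw [h4]; gcongr
    _ = _ := by rw [← pow_mul]; ring_nf

lemma auxB {F A : Type*} [Field F] [CharZero F] [Field A] [Algebra F A] [IsAlgClosed A]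
    (p : F[X]) [hp : Fact (Irreducible p)] (n : ℕ) (hdeg : p.natDegree = n)
    (hG : Nonempty (p.Gal ≃* Equiv.Perm (Fin n))) (w : AdjoinRoot p)
    (hw : ∀ q : F, algebraMap F _ q ≠ w) : Function.Injective fun σ : AdjoinRoot p →ₐ[F] A => σ w := by
  classical
  haveI : FiniteDimensional F (AdjoinRoot p) :=
    Module.Finite.of_basis (AdjoinRoot.powerBasis hp.out.ne_zero).basis
  have hA : ∀ x : AdjoinRoot p, ((minpoly F x).map (algebraMap F A)).Splits := fun x => IsAlgClosed.splits _
  haveI : Fact ((p.map (algebraMap F p.SplittingField)).Splits) := ⟨SplittingField.splits p⟩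
  obtain ⟨φ⟩ := hG
  have hsep : p.Separable := hp.out.separable
  have hc : Fintype.card (p.rootSet p.SplittingField) = n := by
    rw [card_rootSet_eq_natDegree hsep (SplittingField.splits p), hdeg]
  have hbij : Function.Bijective (Gal.galActionHom p p.SplittingField) := by
    rw [Nat.bijective_iff_injective_and_card]
    refine ⟨Gal.galActionHom_injective p _, ?_⟩
    rw [Nat.card_congr φ.toEquiv, Nat.card_perm, Nat.card_perm]
    simp [← hc]
  -- symmetric action
  have hsym : ∀ s : Equiv.Perm (p.rootSet p.SplittingField), ∃ g : Gal(p.SplittingField/F),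
      ∀ x : p.rootSet p.SplittingField, g (x : p.SplittingField) = s x := by
    intro s
    obtain ⟨g, hg⟩ := hbij.2 s
    obtain ⟨g', hg'⟩ := Gal.restrict_surjective p p.SplittingField g
    refine ⟨g', fun x => ?_⟩
    rw [← hg, ← hg', Gal.galActionHom_restrict]
  haveI : IsGalois F p.SplittingField := IsGalois.of_separable_splitting_field hsep
  obtain ⟨g, rfl⟩ := AdjoinRoot.mk_surjective w
  by_contra hni
  have hni2 : ¬ Function.Injective fun φ : AdjoinRoot p →ₐ[F] p.SplittingField => φ (AdjoinRoot.mk p g) := by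
    rw [← Field.primitive_element_iff_algHom_eq_of_eval', Field.primitive_element_iff_algHom_eq_of_eval' F A hA]
    · exact hni
    · intro x
      have hd : (p.map (algebraMap F p.SplittingField)).degree ≠ 0 := by
        rw [degree_map]; exact hp.out.degree_pos.ne'
      have hz := eval_rootOfSplits (SplittingField.splits p) hd
      let ψ : AdjoinRoot p →ₐ[F] p.SplittingField := AdjoinRoot.liftAlgHom p (Algebra.ofId F _)
        (rootOfSplits (SplittingField.splits p) hd) (by rw [eval_map] at hz; exact hz)
      rw [← minpoly.algHom_eq ψ ψ.toRingHom.injective x]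
      exact Normal.splits inferInstance _
  rw [Function.Injective] at hni2
  push Not at hni2
  obtain ⟨σ, τ, h1, h2⟩ := hni2
  have key : ∀ σ : AdjoinRoot p →ₐ[F] p.SplittingField, σ (AdjoinRoot.mk p g) = aeval (σ (AdjoinRoot.root p)) g := by
    intro σ
    rw [← AdjoinRoot.aeval_eq, aeval_algHom_apply]
  have hroot : ∀ σ : AdjoinRoot p →ₐ[F] p.SplittingField, σ (AdjoinRoot.root p) ∈ p.rootSet p.SplittingField := by
    intro σ
    rw [mem_rootSet]
    refine ⟨hp.out.ne_zero, ?_⟩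
    rw [aeval_algHom_apply, AdjoinRoot.aeval_eq, AdjoinRoot.mk_self, map_zero]
  have hr : σ (AdjoinRoot.root p) ≠ τ (AdjoinRoot.root p) := fun h => h2 (AdjoinRoot.algHom_ext h)
  set r1 : p.rootSet p.SplittingField := ⟨_, hroot σ⟩ with hr1
  set r2 : p.rootSet p.SplittingField := ⟨_, hroot τ⟩ with hr2
  have hr12 : r1 ≠ r2 := fun h => hr (congrArg Subtype.val h)
  have hval : aeval (r1 : p.SplittingField) g = aeval (r2 : p.SplittingField) g := by
    rw [← key, ← key]; exact h1
  have hall : ∀ r3 : p.rootSet p.SplittingField, aeval (r1 : p.SplittingField) g = aeval (r3 : p.SplittingField) g := by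
    intro r3
    by_cases h31 : r3 = r1
    · rw [h31]
    obtain ⟨s, hs⟩ := hsym (Equiv.swap r2 r3)
    have e1 := hs r1
    have e2 := hs r2
    rw [Equiv.swap_apply_of_ne_of_ne hr12 (Ne.symm h31)] at e1
    rw [Equiv.swap_apply_left] at e2
    have := congrArg s hval
    rw [← AlgEquiv.coe_toAlgHom, ← aeval_algHom_apply, ← aeval_algHom_apply, AlgEquiv.coe_toAlgHom, e1, e2] at this
    exact this
  have hfix : aeval (r1 : p.SplittingField) g ∈ (⊥ : IntermediateField F p.SplittingField) := by
    rw [IsGalois.mem_bot_iff_fixed]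
    intro s
    rw [← AlgEquiv.coe_toAlgHom, ← aeval_algHom_apply, AlgEquiv.coe_toAlgHom]
    have hm : s (r1 : p.SplittingField) ∈ p.rootSet p.SplittingField := by
      rw [mem_rootSet]
      refine ⟨hp.out.ne_zero, ?_⟩
      have := (mem_rootSet.1 r1.2).2
      rw [← AlgEquiv.coe_toAlgHom, aeval_algHom_apply, this, map_zero]
    exact (hall ⟨_, hm⟩).symm
  rw [IntermediateField.mem_bot] at hfix
  obtain ⟨q, hq⟩ := hfix
  apply hw q
  apply σ.toRingHom.injective
  change σ _ = σ _
  rw [AlgHom.commutes, key, hq]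

lemma auxB' (p : ℚ[X]) [hp : Fact (Irreducible p)] (n : ℕ) (hdeg : p.natDegree = n)
    (hG : Nonempty (p.Gal ≃* Equiv.Perm (Fin n))) (w : AdjoinRoot p)
    (hw : ∀ q : ℚ, AdjoinRoot.of p q ≠ w) : Function.Injective fun σ : AdjoinRoot p →+* ℂ => σ w := by
  have := auxB (A := ℂ) p n hdeg hG w hw
  intro σ τ h
  have e : ∀ σ : AdjoinRoot p →+* ℂ, ∀ q : ℚ, σ (AdjoinRoot.of p q) = algebraMap ℚ ℂ q := by
    intro σ q
    exact congrArg (fun f : ℚ →+* ℂ => f q) (Subsingleton.elim (σ.comp (AdjoinRoot.of p)) (algebraMap ℚ ℂ))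
  let σ' : AdjoinRoot p →ₐ[ℚ] ℂ := { σ with commutes' := e σ }
  let τ' : AdjoinRoot p →ₐ[ℚ] ℂ := { τ with commutes' := e τ }
  have h2 : σ' = τ' := this (a₁ := σ') (a₂ := τ') h
  refine RingHom.ext fun x => ?_
  exact congrArg (fun f : AdjoinRoot p →ₐ[ℚ] ℂ => f x) h2

lemma auxC {G S ι : Type*} [CommGroup G] [Fintype S] [Fintype ι] [DecidableEq ι] [DecidableEq S]
    (l : S → G →* Multiplicative ℝ) (hsum : ∀ g, ∑ σ, (l σ g).toAdd = 0)
    (v : ι → G) (s : ι → S) (hs : Function.Injective s) (hcard : Fintype.card S = Fintype.card ι + 1)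
    (D : ℝ) (hD0 : 0 ≤ D) (hD : ∀ i j, |(l (s i) (v j)).toAdd| ≤ D)
    (hdet : (Matrix.of fun i j => (l (s i) (v j)).toAdd).det ≠ 0)
    (Γ : Subgroup G) (hv : ∀ i, v i ∈ Γ) (u : G) :
    ∃ γ ∈ Γ, ∀ σ, |(l σ (u * γ)).toAdd| ≤ (Fintype.card S : ℝ) ^ 2 * D := by
  set M : Matrix ι ι ℝ := Matrix.of fun i j => (l (s i) (v j)).toAdd with hM
  have hu : IsUnit M.det := isUnit_iff_ne_zero.2 hdet
  set t : ι → ℝ := M⁻¹.mulVec (fun i => (l (s i) u).toAdd) with ht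
  have hMt : M.mulVec t = fun i => (l (s i) u).toAdd := by
    rw [ht, Matrix.mulVec_mulVec, Matrix.mul_nonsing_inv _ hu, Matrix.one_mulVec]
  refine ⟨∏ j, v j ^ (-⌊t j⌋), Subgroup.prod_mem _ fun j _ => Subgroup.zpow_mem _ (hv j) _, ?_⟩
  set u' := u * ∏ j, v j ^ (-⌊t j⌋) with hu'
  have hc : ((Fintype.card S : ℝ)) = Fintype.card ι + 1 := by exact_mod_cast hcard
  have h1 : ∀ i, |(l (s i) u').toAdd| ≤ (Fintype.card ι : ℝ) * D := by
    intro i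
    have e : (l (s i) u').toAdd = ∑ j, Int.fract (t j) * M i j := by
      have := congrFun hMt i
      simp only [Matrix.mulVec, dotProduct] at this
      rw [hu', map_mul, map_prod, toAdd_mul, toAdd_prod, ← this, ← Finset.sum_add_distrib]
      refine Finset.sum_congr rfl fun j _ => ?_
      rw [map_zpow, toAdd_zpow, Int.fract]
      simp [hM]
      rw [← Int.self_sub_floor]
      ring
    rw [e]
    calc _ ≤ ∑ j, |Int.fract (t j) * M i j| := Finset.abs_sum_le_sum_abs _ _
      _ ≤ ∑ j : ι, D := by
        refine Finset.sum_le_sum fun j _ => ?_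
        rw [abs_mul, abs_of_nonneg (Int.fract_nonneg _)]
        calc _ ≤ 1 * |M i j| := by gcongr; exact (Int.fract_lt_one _).le
          _ ≤ D := by rw [one_mul]; exact hD i j
      _ = _ := by simp
  intro σ
  have hk : (0 : ℝ) ≤ Fintype.card ι := by positivity
  by_cases hσ : ∃ i, s i = σ
  · obtain ⟨i, rfl⟩ := hσ
    refine (h1 i).trans ?_
    rw [hc]
    gcongr
    nlinarith
  · have himg : Finset.univ.erase σ = Finset.univ.image s := by
      symm
      apply Finset.eq_of_subset_of_card_le
      · intro x hx
        simp only [Finset.mem_image, Finset.mem_univ, true_and] at hx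
        obtain ⟨i, rfl⟩ := hx
        simp only [Finset.mem_erase, Finset.mem_univ, and_true]
        exact fun h => hσ ⟨i, h⟩
      · rw [Finset.card_image_of_injective _ hs, Finset.card_erase_of_mem (Finset.mem_univ _)]
        simp [hcard]
    have h2 := hsum u'
    rw [← Finset.add_sum_erase _ _ (Finset.mem_univ σ), himg, Finset.sum_image (fun _ _ _ _ h => hs h)] at h2
    have h3 : (l σ u').toAdd = - ∑ i, (l (s i) u').toAdd := by linarith
    rw [h3, abs_neg]
    calc _ ≤ ∑ i, |(l (s i) u').toAdd| := Finset.abs_sum_le_sum_abs _ _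
      _ ≤ ∑ i : ι, (Fintype.card ι : ℝ) * D := Finset.sum_le_sum fun i _ => h1 i
      _ = (Fintype.card ι : ℝ) ^ 2 * D := by simp; ring
      _ ≤ _ := by rw [hc]; gcongr; linarith

lemma auxD {G S : Type*} [CommGroup G] [Fintype S]
    (l : S → G →* Multiplicative ℝ) (Γ : Subgroup G) (R ε : ℝ) (M : ℕ) (hε : 0 < ε) (hR : R ≤ M * ε)
    (h1 : ∀ u, ∃ γ ∈ Γ, ∀ σ, |(l σ (u * γ)).toAdd| ≤ R)
    (h2 : ∀ w, (∀ σ, |(l σ w).toAdd| ≤ ε) → w ∈ Γ) :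
    Γ.index ≠ 0 ∧ Γ.index ≤ (2 * M + 1) ^ Fintype.card S := by
  classical
  have h1' : ∀ q : G ⧸ Γ, ∃ u : G, (u : G ⧸ Γ) = q ∧ ∀ σ, |(l σ u).toAdd| ≤ R := by
    intro q
    obtain ⟨u, rfl⟩ := QuotientGroup.mk_surjective q
    obtain ⟨γ, hγ, h⟩ := h1 u
    exact ⟨u * γ, by simpa using QuotientGroup.mk_mul_of_mem u hγ, h⟩
  choose r hr hb using h1'
  have hmem : ∀ q σ, ⌊(l σ (r q)).toAdd / ε⌋ ∈ Finset.Icc (-(M : ℤ)) M := by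
    intro q σ
    have h := abs_le.1 ((hb q σ).trans hR)
    rw [Finset.mem_Icc]
    constructor
    · rw [Int.le_floor, le_div_iff₀ hε]; push_cast; linarith
    · have : ((⌊(l σ (r q)).toAdd / ε⌋ : ℤ) : ℝ) ≤ M :=
        (Int.floor_le _).trans (by rw [div_le_iff₀ hε]; linarith)
      exact_mod_cast this
  let f : G ⧸ Γ → (S → Finset.Icc (-(M : ℤ)) M) := fun q σ => ⟨_, hmem q σ⟩
  have hf : Function.Injective f := by
    intro q q' h
    rw [← hr q, ← hr q', QuotientGroup.eq]
    apply h2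
    intro σ
    have := congrArg Subtype.val (congrFun h σ)
    simp only [f] at this
    have h3 := Int.abs_sub_lt_one_of_floor_eq_floor this
    rw [← sub_div, abs_div, abs_of_pos hε, div_lt_one hε] at h3
    rw [map_mul, map_inv, toAdd_mul, toAdd_inv, neg_add_eq_sub, abs_sub_comm]
    exact h3.le
  haveI : Finite (G ⧸ Γ) := Finite.of_injective f hf
  refine ⟨Subgroup.FiniteIndex.index_ne_zero (H := Γ) (self := Subgroup.finiteIndex_of_finite_quotient), ?_⟩
  have := Nat.card_le_card_of_injective f hf
  rw [Subgroup.index]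
  refine this.trans (le_of_eq ?_)
  rw [Nat.card_eq_fintype_card, Fintype.card_fun, Fintype.card_coe, Int.card_Icc]
  congr 1
  omega

lemma auxE {ι : Type*} [Fintype ι] [DecidableEq ι] (a : ι → ℤ) (hinj : Function.Injective a) (b : ℤ) (z : ℂ)
    (hz : (∏ k, (z - a k)) * (z - b) = 1) (A : ℝ) (hA1 : 1 ≤ A) (hA : ∀ k, |(a k : ℝ)| ≤ A)
    (hb : 2 * (A + 1) ≤ |(b : ℝ)|) (j : ι) (hj : ‖z - a j‖ < 1 / 2) :
    (∀ k, k ≠ j → |Real.log ‖z - a k‖| ≤ Real.log (2 * A + 2)) ∧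
    |(Real.log ‖z - a j‖ + Real.log (|(b : ℝ)|))| ≤ (Fintype.card ι + 1) * Real.log (2 * A + 2) := by
  have hlog : ∀ x c : ℝ, 1 / c ≤ x → x ≤ c → 0 < c → |Real.log x| ≤ Real.log c := by
    intro x c h1 h2 h3
    have hx : 0 < x := lt_of_lt_of_le (by positivity) h1
    rw [abs_le]
    refine ⟨?_, Real.log_le_log hx h2⟩
    have := Real.log_le_log (by positivity) h1
    rwa [one_div, Real.log_inv] at this
  have hcpos : (0 : ℝ) < 2 * A + 2 := by linarith
  have hhalf : 1 / (2 * A + 2) ≤ 1 / 2 := by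
    apply one_div_le_one_div_of_le <;> linarith
  have h1 : ∀ k, k ≠ j → |Real.log ‖z - a k‖| ≤ Real.log (2 * A + 2) := by
    intro k hk
    have hne : a k ≠ a j := fun h => hk (hinj h)
    have h2 : (1 : ℝ) ≤ ‖((a j : ℂ) - a k)‖ := by
      have h3 : (1 : ℤ) ≤ |a j - a k| := Int.one_le_abs (sub_ne_zero.2 hne.symm)
      have : ‖((a j : ℂ) - a k)‖ = ((|a j - a k| : ℤ) : ℝ) := by
        rw [← Int.cast_sub, Complex.norm_intCast]; simp
      rw [this]; exact_mod_cast h3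
    have h3 : ‖((a j : ℂ) - a k)‖ ≤ 2 * A := by
      have := norm_sub_le (a j : ℂ) (a k)
      rw [Complex.norm_intCast, Complex.norm_intCast] at this
      linarith [hA j, hA k]
    have e : z - a k = (z - a j) + ((a j : ℂ) - a k) := by ring
    have h4 := norm_add_le (z - a j) ((a j : ℂ) - a k)
    have h5 := norm_sub_le_norm_add ((a j : ℂ) - a k) (z - a j)
    rw [add_comm ((a j : ℂ) - a k)] at h5
    rw [← e] at h4 h5
    apply hlog <;> linarith
  refine ⟨h1, ?_⟩
  have hbpos : 0 < |(b : ℝ)| := by linarith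
  have hzb : |(Real.log ‖z - b‖ - Real.log (|(b : ℝ)|))| ≤ Real.log (2 * A + 2) := by
    have h2 : ‖z - (a j)‖ + ‖(a j : ℂ)‖ ≤ |(b : ℝ)| / 2 := by
      rw [Complex.norm_intCast]; linarith [hA j]
    have h2' : ‖z‖ ≤ |(b : ℝ)| / 2 := by
      have := norm_add_le (z - a j) (a j)
      rw [sub_add_cancel] at this
      linarith
    have h3 := norm_sub_le z b
    have h4 := norm_sub_norm_le (b : ℂ) z
    rw [norm_sub_rev] at h4
    rw [Complex.norm_intCast] at h3 h4
    have hp : 0 < ‖z - b‖ := by linarith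
    rw [← Real.log_div hp.ne' hbpos.ne']
    apply hlog _ _ _ _ hcpos
    · rw [le_div_iff₀ hbpos]
      calc _ ≤ 1 / 2 * |(b : ℝ)| := by gcongr
        _ ≤ _ := by linarith
    · rw [div_le_iff₀ hbpos]
      nlinarith
  have hne : ∀ k, ‖z - a k‖ ≠ 0 := by
    intro k h
    rw [norm_eq_zero] at h
    rw [Finset.prod_eq_zero (Finset.mem_univ k) h, zero_mul] at hz
    exact zero_ne_one hz
  have hneb : ‖z - b‖ ≠ 0 := by
    intro h
    rw [norm_eq_zero] at h
    rw [h, mul_zero] at hz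
    exact zero_ne_one hz
  have hs : ∑ k, Real.log ‖z - a k‖ + Real.log ‖z - b‖ = 0 := by
    rw [← Real.log_prod (fun k _ => hne k), ← Real.log_mul (Finset.prod_ne_zero_iff.2 fun k _ => hne k) hneb,
      ← norm_prod, ← norm_mul, hz]
    simp
  rw [← Finset.add_sum_erase _ _ (Finset.mem_univ j)] at hs
  have hs2 : |∑ k ∈ Finset.univ.erase j, Real.log ‖z - a k‖| ≤ Fintype.card ι * Real.log (2 * A + 2) := by
    calc _ ≤ ∑ k ∈ Finset.univ.erase j, |Real.log ‖z - a k‖| := Finset.abs_sum_le_sum_abs _ _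
      _ ≤ ∑ k ∈ Finset.univ.erase j, Real.log (2 * A + 2) :=
        Finset.sum_le_sum fun k hk => h1 k (Finset.ne_of_mem_erase hk)
      _ ≤ ∑ k : ι, Real.log (2 * A + 2) :=
        Finset.sum_le_sum_of_subset_of_nonneg (Finset.erase_subset _ _)
          fun _ _ _ => Real.log_nonneg (by linarith)
      _ = _ := by simp
  rw [abs_le] at hs2 hzb ⊢
  constructor <;> nlinarith

noncomputable def lgEmb {K : Type*} [Field K] [NumberField K] (σ : K →+* ℂ) : (𝓞 K)ˣ →* Multiplicative ℝ where
  toFun u := Multiplicative.ofAdd (Real.log ‖σ (u : K)‖)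
  map_one' := by simp
  map_mul' u v := by
    have h : ∀ u : (𝓞 K)ˣ, ‖σ (u : K)‖ ≠ 0 := fun u => by simp
    rw [← ofAdd_add, ← Real.log_mul (h u) (h v)]
    simp

lemma lgEmb_toAdd {K : Type*} [Field K] [NumberField K] (σ : K →+* ℂ) (u : (𝓞 K)ˣ) :
    (lgEmb σ u).toAdd = Real.log ‖σ (u : K)‖ := rfl

lemma lgEmb_sum {K : Type*} [Field K] [NumberField K] (u : (𝓞 K)ˣ) :
    ∑ σ : K →+* ℂ, (lgEmb σ u).toAdd = 0 := by
  have h1 := NumberField.Units.norm K u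
  have h2 := Algebra.norm_eq_prod_embeddings ℚ ℂ (u : K)
  have h3 : ∏ σ : K →+* ℂ, ‖σ (u : K)‖ = 1 := by
    rw [← norm_prod]
    have : ∏ σ : K →+* ℂ, σ (u : K) = ∏ σ : K →ₐ[ℚ] ℂ, σ (u : K) :=
      Fintype.prod_equiv (RingHom.equivRatAlgHom K ℂ) _ _ fun σ => rfl
    rw [this, ← h2]
    have h4 : ((|Algebra.norm ℚ (u : K)| : ℚ) : ℝ) = 1 := by rw [h1]; simp
    rw [Rat.cast_abs] at h4
    simp only [eq_ratCast, Complex.norm_ratCast]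
    exact h4
  simp only [lgEmb_toAdd]
  rw [← Real.log_prod (fun σ _ => by simp), h3, Real.log_one]

lemma auxF {K ι : Type*} [Field K] [NumberField K] [Fintype ι] [DecidableEq ι]
    (hfr : Module.finrank ℚ K = Fintype.card ι + 1) (a : ι → ℤ) (hinj : Function.Injective a) (b : ℤ) (ξ : K)
    (hξ : (∏ k, (ξ - a k)) * (ξ - b) = 1) (A : ℝ) (hA1 : 1 ≤ A) (hA : ∀ k, |(a k : ℝ)| ≤ A)
    (hb : 2 * (A + 1) ≤ |(b : ℝ)|) (hb2 : A + 2 ^ Fintype.card ι + 1 < |(b : ℝ)|)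
    (hb3 : (2 * Fintype.card ι + 3) * Real.log (2 * A + 2) < Real.log |(b : ℝ)|)
    (v : ι → (𝓞 K)ˣ) (hv : ∀ k, (v k : K) = ξ - a k) (vb : (𝓞 K)ˣ) (hvb : (vb : K) = ξ - b)
    (Γ : Subgroup (𝓞 K)ˣ) (hΓ : ∀ k, v k ∈ Γ) (u : (𝓞 K)ˣ) :
    ∃ γ ∈ Γ, ∀ σ : K →+* ℂ, |(lgEmb σ (u * γ)).toAdd| ≤
      (Fintype.card ι + 1 : ℝ) ^ 2 * (2 * Real.log |(b : ℝ)|) := by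
  classical
  have hcard : Fintype.card (K →+* ℂ) = Fintype.card ι + 1 := by
    rw [NumberField.Embeddings.card, hfr]
  have hc0 : 0 ≤ Real.log (2 * A + 2) := Real.log_nonneg (by linarith)
  have hn0 : (0 : ℝ) ≤ Fintype.card ι := by positivity
  have hlv : ∀ (σ : K →+* ℂ) k, (lgEmb σ (v k)).toAdd = Real.log ‖σ ξ - a k‖ := by
    intro σ k; rw [lgEmb_toAdd, hv]; simp
  have hex : ∀ j, ∃ σ : K →+* ℂ, ‖σ ξ - a j‖ < 1 / 2 := by
    intro j
    by_contra! hcon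
    have h1 : ∀ σ : K →+* ℂ, ‖σ ξ - a j‖ ≤ 2 ^ Fintype.card ι := by
      intro σ
      have hs := lgEmb_sum (v j)
      rw [← Finset.add_sum_erase _ _ (Finset.mem_univ σ)] at hs
      have h2 : -(Fintype.card ι * Real.log 2) ≤ ∑ τ ∈ Finset.univ.erase σ, (lgEmb τ (v j)).toAdd := by
        calc _ = ∑ τ ∈ (Finset.univ : Finset (K →+* ℂ)).erase σ, (-Real.log 2) := by
              rw [Finset.sum_const, Finset.card_erase_of_mem (Finset.mem_univ _), Finset.card_univ, hcard]
              simp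
          _ ≤ _ := by
            refine Finset.sum_le_sum fun τ _ => ?_
            rw [hlv, ← Real.log_inv]
            apply Real.log_le_log (by norm_num)
            have := hcon τ
            linarith
      rw [hlv] at hs
      have hpos : 0 < ‖σ ξ - a j‖ := lt_of_lt_of_le (by norm_num) (hcon σ)
      rw [← Real.log_le_log_iff hpos (by positivity), Real.log_pow]
      linarith
    have h2 : ∀ σ : K →+* ℂ, 0 < (lgEmb σ vb).toAdd := by
      intro σ
      rw [lgEmb_toAdd, hvb]
      apply Real.log_pos
      have e : σ (ξ - b) = (σ ξ - a j) + (a j - b) := by simp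
      have e1 := norm_sub_le_norm_add ((a j : ℂ) - b) (σ ξ - a j)
      rw [add_comm ((a j : ℂ) - b), ← e] at e1
      have e2 := norm_sub_norm_le (b : ℂ) (a j)
      rw [norm_sub_rev, Complex.norm_intCast, Complex.norm_intCast] at e2
      linarith [h1 σ, hA j]
    have hne : Nonempty (K →+* ℂ) := Fintype.card_pos_iff.1 (by omega)
    have := Finset.sum_pos (fun σ _ => h2 σ) (Finset.univ_nonempty (α := K →+* ℂ))
    rw [lgEmb_sum] at this
    exact lt_irrefl _ this
  choose s hs using hex
  have hroot : ∀ σ : K →+* ℂ, (∏ k, (σ ξ - a k)) * (σ ξ - b) = 1 := by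
    intro σ
    have := congrArg σ hξ
    simpa using this
  have hE := fun j => auxE a hinj b (s j ξ) (hroot _) A hA1 hA hb j (hs j)
  have hsinj : Function.Injective s := by
    intro i j hij
    by_contra hne
    have h1 := hs i
    have h2 := hs j
    rw [hij] at h1
    have h3 : (1 : ℝ) ≤ ‖((a j : ℂ) - a i)‖ := by
      have h3 : (1 : ℤ) ≤ |a j - a i| := Int.one_le_abs (sub_ne_zero.2 fun h => hne (hinj h.symm))
      have : ‖((a j : ℂ) - a i)‖ = ((|a j - a i| : ℤ) : ℝ) := by
        rw [← Int.cast_sub, Complex.norm_intCast]; simp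
      rw [this]; exact_mod_cast h3
    have e : (a j : ℂ) - a i = (s j ξ - a i) - (s j ξ - a j) := by ring
    rw [e] at h3
    have := norm_sub_le (s j ξ - a i) (s j ξ - a j)
    linarith
  have key := auxC (lgEmb (K := K)) lgEmb_sum v s hsinj hcard (2 * Real.log |(b : ℝ)|)
    (by nlinarith) ?_ ?_ Γ hΓ u
  · rw [hcard] at key
    exact_mod_cast key
  · intro i j
    rw [hlv]
    by_cases hij : j = i
    · subst hij
      have := abs_le.1 (hE j).2
      rw [abs_le]
      constructor <;> nlinarith
    · have := (hE i).1 j hij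
      nlinarith
  · apply det_ne_zero_of_sum_row_lt_diag
    intro i
    simp only [Matrix.of_apply, hlv, Real.norm_eq_abs]
    calc _ ≤ ∑ j ∈ Finset.univ.erase i, Real.log (2 * A + 2) :=
          Finset.sum_le_sum fun j hj => (hE i).1 j (Finset.ne_of_mem_erase hj)
      _ ≤ ∑ j : ι, Real.log (2 * A + 2) :=
        Finset.sum_le_sum_of_subset_of_nonneg (Finset.erase_subset _ _) fun _ _ _ => hc0
      _ = Fintype.card ι * Real.log (2 * A + 2) := by simp
      _ < _ := by
        have := abs_le.1 (hE i).2
        refine lt_of_lt_of_le ?_ (neg_le_abs _)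
        nlinarith

lemma auxPoly {R ι : Type*} [CommRing R] [Nontrivial R] [Fintype ι] (a : ι → R) (b : R) :
    ((∏ i, (X - C (a i))) * (X - C b) - 1).Monic ∧
    ((∏ i, (X - C (a i))) * (X - C b) - 1).natDegree = Fintype.card ι + 1 := by
  have hm1 : (∏ i, (X - C (a i))).Monic := monic_prod_of_monic _ _ fun i _ => monic_X_sub_C _
  have hm : ((∏ i, (X - C (a i))) * (X - C b)).Monic := hm1.mul (monic_X_sub_C _)
  have hd : ((∏ i, (X - C (a i))) * (X - C b)).natDegree = Fintype.card ι + 1 := by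
    rw [hm1.natDegree_mul (monic_X_sub_C _), natDegree_prod_of_monic _ _ fun i _ => monic_X_sub_C _]
    simp
  constructor
  · apply hm.sub_of_left
    rw [degree_one, degree_eq_natDegree hm.ne_zero, hd]
    exact_mod_cast Nat.succ_pos _
  · rw [natDegree_sub_eq_left_of_natDegree_lt, hd]
    rw [natDegree_one, hd]
    omega

lemma aTau_abs (n ℓ : ℕ) (a : Fin (n - 1) → ℤ) (τ : ℤ) (hd : (∏ i, a i) ∣ (τ - 1)) :
    |aTau n ℓ a τ| * |∏ i, a i| = |τ ^ ℓ - 1| := by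
  have h : (∏ i, a i) ∣ τ ^ ℓ - 1 := hd.trans (by simpa using sub_dvd_pow_sub_pow τ 1 ℓ)
  rw [aTau, abs_mul, abs_pow]
  simp only [abs_neg, abs_one, one_pow, one_mul]
  rw [← abs_mul, Int.ediv_mul_cancel h]

lemma aTau_le (n ℓ : ℕ) (a : Fin (n - 1) → ℤ) (hne : ∀ i, a i ≠ 0) (τ : ℤ)
    (hd : (∏ i, a i) ∣ (τ - 1)) (h2 : 2 ≤ |τ|) : |aTau n ℓ a τ| ≤ |τ| ^ (ℓ + 1) := by
  have h := aTau_abs n ℓ a τ hd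
  have hP : 1 ≤ |∏ i, a i| := Int.one_le_abs (Finset.prod_ne_zero_iff.2 fun i _ => hne i)
  have h3 : |τ ^ ℓ - 1| ≤ |τ| ^ ℓ + 1 := by
    have := abs_sub (τ ^ ℓ) 1
    rwa [abs_pow, abs_one] at this
  have h4 : 1 ≤ |τ| ^ ℓ := one_le_pow₀ (by omega)
  have h5 := abs_nonneg (aTau n ℓ a τ)
  rw [pow_succ]
  nlinarith

lemma aTau_ge (n ℓ : ℕ) (hℓ : 1 ≤ ℓ) (a : Fin (n - 1) → ℤ) (τ : ℤ)
    (hd : (∏ i, a i) ∣ (τ - 1)) (h2 : 2 ≤ |τ|) : |τ| - 1 ≤ |aTau n ℓ a τ| * |∏ i, a i| := by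
  rw [aTau_abs n ℓ a τ hd]
  have h3 := abs_sub_abs_le_abs_sub (τ ^ ℓ) 1
  rw [abs_pow, abs_one] at h3
  have h4 : |τ| ^ 1 ≤ |τ| ^ ℓ := pow_le_pow_right₀ (by omega) hℓ
  rw [pow_one] at h4
  omega

lemma finrank_AR (p : ℚ[X]) [hp : Fact (Irreducible p)] :
    @Module.finrank ℚ (AdjoinRoot p) _ _ (DivisionRing.toRatAlgebra).toModule = p.natDegree := by
  have h := (AdjoinRoot.powerBasis hp.out.ne_zero).finrank
  rw [AdjoinRoot.powerBasis_dim] at h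
  rw [← h]

lemma auxG (n ℓ : ℕ) (hn : 3 ≤ n) (a : Fin (n - 1) → ℤ) (hinj : Function.Injective a)
    (hne : ∀ i, a i ≠ 0) (A : ℝ) (hA1 : 1 ≤ A) (hA : ∀ k, |(a k : ℝ)| ≤ A) (τ : ℤ)
    (hd : (∏ i, a i) ∣ (τ - 1)) (hτ2 : 2 ≤ |τ|)
    (hb : 2 * (A + 1) ≤ |(aTau n ℓ a τ : ℝ)|) (hb2 : A + 2 ^ n + 1 < |(aTau n ℓ a τ : ℝ)|)
    (hb3 : (2 * n + 3) * Real.log (2 * A + 2) < Real.log |(aTau n ℓ a τ : ℝ)|)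
    (hτ3 : 2 * n ^ 2 * (n + 2) * Real.log 2 ≤ Real.log |(τ : ℝ)|)
    (hG : Nonempty ((specPolyQ n ℓ a τ).Gal ≃* Equiv.Perm (Fin n)))
    [hp : Fact (Irreducible (specPolyQ n ℓ a τ))]
    (hdisc : |(NumberField.discr (AdjoinRoot (specPolyQ n ℓ a τ)) : ℝ)| >
            |(τ : ℝ)| ^ ((2 : ℝ) / ((n : ℝ) + 2))) :
    (abcUnitSubgroup n ℓ a τ).index ≠ 0 ∧
      (abcUnitSubgroup n ℓ a τ).index ≤ (2 * (4 * n ^ 4 * (n + 2) * (ℓ + 1)) + 1) ^ n := by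
  set p := specPolyQ n ℓ a τ with hpdef
  set b := aTau n ℓ a τ with hbdef
  have hcn : Fintype.card (Fin (n - 1)) + 1 = n := by simp; omega
  have hdeg : p.natDegree = n := by
    have := (auxPoly (fun i => ((a i : ℤ) : ℚ)) (b : ℚ)).2
    rw [hcn] at this
    exact this
  have hfr := finrank_AR p
  rw [hdeg] at hfr
  set ξ := AdjoinRoot.root p with hξdef
  have hξ : (∏ k, (ξ - a k)) * (ξ - b) = 1 := by
    have h := AdjoinRoot.mk_self (f := p)
    have h2 : AdjoinRoot.mk p p = (∏ k, (ξ - a k)) * (ξ - b) - 1 := by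
      conv_lhs => arg 2; rw [hpdef, specPolyQ]
      rw [map_sub, map_mul, map_prod]
      simp only [map_sub, AdjoinRoot.mk_X, AdjoinRoot.mk_C, map_intCast, map_one]
      rfl
    rw [h2] at h
    exact sub_eq_zero.1 h
  have hint : IsIntegral ℤ ξ := by
    refine ⟨_, (auxPoly a b).1, ?_⟩
    simp only [eval₂_sub, eval₂_mul, eval₂_finsetProd, eval₂_X, eval₂_C, eval₂_one]
    simp only [algebraMap_int_eq, eq_intCast]
    rw [hξ, sub_self]
  let x : 𝓞 (AdjoinRoot p) := ⟨ξ, hint⟩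
  have hx : (x : AdjoinRoot p) = ξ := rfl
  have hprod : (∏ k, (x - a k)) * (x - b) = 1 := by
    apply RingOfIntegers.coe_injective
    simp only [map_mul, map_prod, map_sub, map_intCast, map_one, hx]
    exact hξ
  have hu : ∀ k, ∃ u : (𝓞 (AdjoinRoot p))ˣ, (u : 𝓞 (AdjoinRoot p)) = x - a k := fun k => by
    have : IsUnit (x - a k : 𝓞 (AdjoinRoot p)) := isUnit_of_dvd_one
      (((Finset.dvd_prod_of_mem _ (Finset.mem_univ k)).trans (Dvd.intro _ rfl)).trans (dvd_of_eq hprod))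
    exact ⟨this.unit, rfl⟩
  choose v hv using hu
  obtain ⟨vb, hvb⟩ : ∃ u : (𝓞 (AdjoinRoot p))ˣ, (u : 𝓞 (AdjoinRoot p)) = x - b := by
    have : IsUnit (x - b : 𝓞 (AdjoinRoot p)) := isUnit_of_dvd_one
      ((Dvd.intro_left _ rfl).trans (dvd_of_eq hprod))
    exact ⟨this.unit, rfl⟩
  have hv' : ∀ k, ((v k : 𝓞 (AdjoinRoot p)) : AdjoinRoot p) = ξ - a k := by
    intro k
    rw [hv]
    change algebraMap (𝓞 (AdjoinRoot p)) (AdjoinRoot p) (x - a k) = _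
    rw [map_sub, map_intCast]
    rfl
  have hvb' : ((vb : 𝓞 (AdjoinRoot p)) : AdjoinRoot p) = ξ - b := by
    rw [hvb]
    change algebraMap (𝓞 (AdjoinRoot p)) (AdjoinRoot p) (x - b) = _
    rw [map_sub, map_intCast]
    rfl
  set Γ := abcUnitSubgroup n ℓ a τ with hΓ
  have hvΓ : ∀ k, v k ∈ Γ := fun k => Subgroup.subset_closure (Or.inr ⟨k, hv' k⟩)
  have hnegΓ : (-1 : (𝓞 (AdjoinRoot p))ˣ) ∈ Γ := Subgroup.subset_closure (Or.inl (by simp))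
  have hcR : (Fintype.card (Fin (n - 1)) : ℝ) + 1 = n := by exact_mod_cast hcn
  have hlc : 0 ≤ Real.log (2 * A + 2) := Real.log_nonneg (by linarith)
  have hF := auxF (hfr.trans hcn.symm) a hinj b ξ hξ A hA1 hA hb
    (lt_of_le_of_lt (by
      have : (2 : ℝ) ^ Fintype.card (Fin (n - 1)) ≤ 2 ^ n :=
        pow_le_pow_right₀ (by norm_num) (by omega)
      linarith) hb2)
    (lt_of_le_of_lt (by
      apply mul_le_mul_of_nonneg_right _ hlc
      linarith) hb3) v hv' vb hvb' Γ hvΓ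
  rw [hcR] at hF
  have hnR : (3 : ℝ) ≤ n := by exact_mod_cast hn
  have hτR : (2 : ℝ) ≤ |(τ : ℝ)| := by exact_mod_cast hτ2
  set L := Real.log |(τ : ℝ)| with hL
  have hLpos : 0 < L := Real.log_pos (by linarith)
  set ε : ℝ := L / (2 * n ^ 2 * (n + 2)) with hε
  have hdpos : (0 : ℝ) < 2 * n ^ 2 * (n + 2) := by positivity
  have hεpos : 0 < ε := by positivity
  have hLε : L = ε * (2 * n ^ 2 * (n + 2)) := by rw [hε]; field_simp
  have hlogb : Real.log |(b : ℝ)| ≤ (ℓ + 1) * L := by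
    have h1 : |(b : ℝ)| ≤ |(τ : ℝ)| ^ (ℓ + 1) := by exact_mod_cast aTau_le n ℓ a hne τ hd hτ2
    have h2 : 0 < |(b : ℝ)| := by linarith
    have := Real.log_le_log h2 h1
    rw [Real.log_pow] at this
    push_cast at this
    exact this
  have hD := auxD (lgEmb (K := AdjoinRoot p)) Γ ((n : ℝ) ^ 2 * (2 * Real.log |(b : ℝ)|)) ε
    (4 * n ^ 4 * (n + 2) * (ℓ + 1)) hεpos ?_ hF ?_
  · rw [NumberField.Embeddings.card, hfr] at hD
    exact hD
  · calc _ ≤ (n : ℝ) ^ 2 * (2 * ((ℓ + 1) * L)) := by gcongr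
      _ = _ := by rw [hLε]; push_cast; ring
  · intro w hw
    by_cases hq : ∃ q : ℚ, AdjoinRoot.of p q = (w : AdjoinRoot p)
    · obtain ⟨q, hq⟩ := hq
      have hq0 : q ≠ 0 := by
        rintro rfl
        rw [map_zero] at hq
        exact NumberField.Units.coe_ne_zero w hq.symm
      have hs := lgEmb_sum w
      have e : ∀ σ : AdjoinRoot p →+* ℂ, (lgEmb σ w).toAdd = Real.log |(q : ℝ)| := by
        intro σ
        rw [lgEmb_toAdd, ← hq]
        have : σ (AdjoinRoot.of p q) = (q : ℂ) := by
          rw [← RingHom.comp_apply]; simp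
        rw [this, Complex.norm_ratCast]
      simp only [e, Finset.sum_const, Finset.card_univ, NumberField.Embeddings.card, hfr, nsmul_eq_mul] at hs
      have h0 : Real.log |(q : ℝ)| = 0 := by
        rcases mul_eq_zero.1 hs with h | h
        · linarith
        · exact h
      have h1 : |(q : ℝ)| = 1 := by
        apply Real.eq_one_of_pos_of_log_eq_zero _ h0
        rw [abs_pos]; exact_mod_cast hq0
      have h2 : |q| = 1 := by exact_mod_cast h1
      rcases eq_or_eq_neg_of_abs_eq h2 with rfl | rfl
      · have : w = 1 := by
          apply Units.ext
          apply RingOfIntegers.coe_injective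
          rw [← hq]; simp
        rw [this]; exact Γ.one_mem
      · have : w = -1 := by
          apply Units.ext
          apply RingOfIntegers.coe_injective
          rw [← hq]; simp
        rw [this]; exact hnegΓ
    · exfalso
      push Not at hq
      have hi := auxB' p n hdeg hG w hq
      have hbd : ∀ σ : AdjoinRoot p →+* ℂ, ‖σ (w : AdjoinRoot p)‖ ≤ Real.exp ε := by
        intro σ
        have h1 := (abs_le.1 (hw σ)).2
        rw [lgEmb_toAdd] at h1
        exact (Real.log_le_iff_le_exp (by simp)).1 h1
      have h1 : 1 ≤ 2 * Real.exp ε := by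
        have := Real.one_le_exp hεpos.le
        linarith
      have := auxA (w : 𝓞 (AdjoinRoot p)) n hfr hi (Real.exp ε) hbd h1
      have h2 : (2 * Real.exp ε) ^ (2 * n ^ 2) ≤ |(τ : ℝ)| ^ ((2 : ℝ) / ((n : ℝ) + 2)) := by
        rw [Real.rpow_def_of_pos (by linarith), ← hL]
        have e2 : 2 * Real.exp ε = Real.exp (Real.log 2 + ε) := by
          rw [Real.exp_add, Real.exp_log (by norm_num)]
        rw [e2, ← Real.exp_nat_mul]
        apply Real.exp_le_exp.2
        have h3 : Real.log 2 ≤ ε := by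
          rw [hε, le_div_iff₀ hdpos]; linarith
        calc _ ≤ ((2 * n ^ 2 : ℕ) : ℝ) * (ε + ε) := by gcongr
          _ = _ := by rw [hLε]; push_cast; field_simp; ring
      linarith

/-- **Proposition 6.1.**  There exists an admissible pair: positive integers `N, T₀`
such that for every integer `τ` with `|τ| ≥ T₀`, `τ ≡ 1 (mod a_1⋯a_{n-1})`, for which
the Galois group of `f(τ,x)` over `ℚ` is `S_n` and `|disc K_{a(τ)}| > |τ|^{2/(n+2)}`,
the subgroup generated by `−1` and the ABC-units has finite index at most `N`. -/
theorem admissible_pair_exists (n ℓ : ℕ) (hn : 3 ≤ n) (hℓ : 1 ≤ ℓ)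
    (a : Fin (n - 1) → ℤ) (hinj : Function.Injective a) (hne : ∀ i, a i ≠ 0)
    (hsep : (mainPoly n ℓ a).Separable)
    (hGal : Nonempty ((mainPoly n ℓ a).Gal ≃* Equiv.Perm (Fin n)))
    (hsep0 : (mainPolyZero n ℓ a).Separable) :
    ∃ N T₀ : ℕ, Admissible n ℓ a N T₀ := by
  set A : ℝ := 1 + ∑ k, |(a k : ℝ)| with hAdef
  have hs0 : 0 ≤ ∑ k, |(a k : ℝ)| := Finset.sum_nonneg fun _ _ => abs_nonneg _
  have hA1 : 1 ≤ A := by linarith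
  have hA : ∀ k, |(a k : ℝ)| ≤ A := fun k => by
    have := Finset.single_le_sum (f := fun k => |(a k : ℝ)|) (fun _ _ => abs_nonneg _) (Finset.mem_univ k)
    linarith
  set P : ℝ := |((∏ i, a i : ℤ) : ℝ)| with hP
  have hPpos : 0 < P := abs_pos.2 (by exact_mod_cast Finset.prod_ne_zero_iff.2 fun i _ => hne i)
  set c : ℝ := (2 * n + 3) * Real.log (2 * A + 2) with hc
  set B : ℝ := 2 * (A + 1) + (A + 2 ^ n + 1) + Real.exp c with hB
  set E : ℝ := Real.exp (2 * n ^ 2 * (n + 2) * Real.log 2) with hE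
  obtain ⟨T, hT⟩ := exists_nat_ge (B * P + 1 + E + 2)
  have hBpos : 0 < B := by positivity
  have hEpos : 0 < E := by positivity
  have hBP : 0 < B * P := by positivity
  refine ⟨(2 * (4 * n ^ 4 * (n + 2) * (ℓ + 1)) + 1) ^ n, T, by positivity, ?_, ?_⟩
  · have : (0 : ℝ) < T := by linarith
    exact_mod_cast this
  intro τ hτ hd hG hp hdisc
  have hτR : (T : ℝ) ≤ |(τ : ℝ)| := by exact_mod_cast hτ
  have hτ2R : (2 : ℝ) ≤ |(τ : ℝ)| := by linarith
  have hτ2 : 2 ≤ |τ| := by exact_mod_cast hτ2R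
  have hge : |(τ : ℝ)| - 1 ≤ |(aTau n ℓ a τ : ℝ)| * P := by
    rw [hP]
    exact_mod_cast aTau_ge n ℓ hℓ a τ hd hτ2
  have hb : B < |(aTau n ℓ a τ : ℝ)| := by
    have : B * P < |(aTau n ℓ a τ : ℝ)| * P := by linarith
    exact lt_of_mul_lt_mul_right this hPpos.le
  have h2n : (0 : ℝ) < 2 ^ n := by positivity
  have hexp := Real.exp_pos c
  apply auxG n ℓ hn a hinj hne A hA1 hA τ hd hτ2 (by linarith) (by linarith) _ _ hG hdisc
  · rw [Real.lt_log_iff_exp_lt (by linarith)]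
    linarith
  · rw [Real.le_log_iff_exp_le (by linarith)]
    linarith
end

section
/- Let (N, T₀) be an admissible pair and let τ be a suitable integer with respect to (N, T₀). Then the ideal class group of the number field K_{a(τ)} contains an element of order exactly ℓ. -/
open Polynomial NumberField

set_option synthInstance.maxHeartbeats 1000000
set_option maxHeartbeats 1000000

lemma ideal_pow_aux {R : Type*} [CommRing R] [IsDedekindDomain R] (F : ℤ[X]) (x : R)
    (hx : aeval x F = 0) (τ : ℤ) (ℓ : ℕ) (h0 : F.coeff 0 = -τ ^ ℓ)
    (h1 : IsCoprime τ (F.coeff 1)) :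
    ∃ I : Ideal R, Ideal.span {x} = I ^ ℓ := by
  have e1 : F.divX * X + C (F.coeff 0) = F := divX_mul_X_add F
  have e2 : F.divX.divX * X + C (F.coeff 1) = F.divX := by
    have := divX_mul_X_add F.divX
    rwa [coeff_divX, zero_add] at this
  have f1 : aeval x F.divX * x = (τ : R) ^ ℓ := by
    have := congrArg (aeval x) e1
    rw [hx, h0] at this
    simp at this
    linear_combination this
  have f2 : aeval x F.divX = aeval x F.divX.divX * x + (F.coeff 1 : R) := by
    have := congrArg (aeval x) e2
    simp at this
    exact this.symm
  have hc : IsCoprime x (aeval x F.divX) := by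
    obtain ⟨u, v, huv⟩ := (h1.pow_left (m := ℓ))
    have huv' : (u : R) * (τ : R) ^ ℓ + v * (F.coeff 1 : R) = 1 := by
      have := congrArg (Int.cast : ℤ → R) huv
      push_cast at this
      exact this
    refine ⟨u * aeval x F.divX - v * aeval x F.divX.divX, v, ?_⟩
    linear_combination huv' + (u : R) * f1 + (v : R) * f2
  have := exists_eq_pow_of_mul_eq_pow_of_coprime (R := Ideal R) (a := Ideal.span {x})
    (b := Ideal.span {aeval x F.divX}) (c := Ideal.span {(τ : R)}) (n := ℓ)
    (by rw [Ideal.isCoprime_span_singleton_iff]; exact hc)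
    (by rw [Ideal.span_singleton_mul_span_singleton, Ideal.span_singleton_pow, mul_comm, f1])
  exact this

lemma class_aux {R : Type*} [CommRing R] [IsDedekindDomain R] (x : R) (hx : x ≠ 0)
    (ℓ : ℕ) (hℓ : 1 ≤ ℓ) (I : Ideal R) (hI : Ideal.span {x} = I ^ ℓ) :
    (∃ C : ClassGroup R, orderOf C = ℓ) ∨
    ∃ (m k : ℕ) (α : R) (u : Rˣ), 0 < m ∧ m < ℓ ∧ m * k = ℓ ∧ α ^ k = x * u := by
  have hI0 : I ≠ 0 := by
    rintro rfl
    rw [zero_pow (by omega)] at hI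
    exact hx (by simpa using hI)
  have hI1 := mem_nonZeroDivisors_of_ne_zero hI0
  set C := ClassGroup.mk0 ⟨I, hI1⟩ with hC
  have key : ∀ j : ℕ, C ^ j = 1 ↔ (I ^ j).IsPrincipal := by
    intro j
    rw [← ClassGroup.mk0_eq_one_iff (pow_mem hI1 j), hC, ← map_pow]
    rfl
  have hd : orderOf C ∣ ℓ := by
    rw [orderOf_dvd_iff_pow_eq_one, key, ← hI]
    exact ⟨⟨x, rfl⟩⟩
  by_cases hE : orderOf C = ℓ
  · exact Or.inl ⟨C, hE⟩
  right
  obtain ⟨k, hk⟩ := hd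
  have hp : 0 < orderOf C := Nat.pos_of_ne_zero (by rintro h; rw [h] at hk; omega)
  have hle : orderOf C ≤ ℓ := Nat.le_of_dvd (by omega) ⟨k, hk⟩
  obtain ⟨⟨α, hα⟩⟩ := (key (orderOf C)).1 (pow_orderOf_eq_one C)
  have hα' : I ^ orderOf C = Ideal.span {α} := hα
  have : Ideal.span {x} = Ideal.span {α ^ k} := by
    rw [hI, ← Ideal.span_singleton_pow, ← hα', ← pow_mul, ← hk]
  rw [Ideal.span_singleton_eq_span_singleton] at this
  obtain ⟨u, hu⟩ := this
  exact ⟨orderOf C, k, α, u, hp, by omega, hk.symm, hu.symm⟩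

lemma norm_aux {S : Type*} [CommRing S] [Algebra ℚ S] (pb : PowerBasis ℚ S) (c : ℚ) :
    Algebra.norm ℚ (pb.gen - algebraMap ℚ S c) = (-1) ^ pb.dim * (minpoly ℚ pb.gen).eval c := by
  have h : Algebra.norm ℚ (algebraMap ℚ S c - pb.gen) = (minpoly ℚ pb.gen).eval c := by
    rw [← charpoly_leftMulMatrix, Algebra.norm_eq_matrix_det pb.basis, Matrix.charpoly,
      ← coe_evalRingHom, RingHom.map_det]
    congr 1
    rw [map_sub]
    ext i j
    simp [Matrix.charmatrix_apply, Matrix.algebraMap_eq_diagonal, Matrix.diagonal_apply]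
    split_ifs <;> simp
  rw [← h, ← neg_sub (algebraMap ℚ S c), ← neg_one_mul, map_mul]
  congr 1
  rw [show (-1 : S) = algebraMap ℚ S (-1) by simp, Algebra.norm_algebraMap_of_basis pb.basis]
  simp

lemma root_right {ι : Type*} [Fintype ι] (a : ι → ℤ) (b : ℤ) (j : ι) (hj : ∀ i, a i ≤ a j) :
    ∃ r : ℝ, (a j : ℝ) < r ∧ (∏ i, (r - a i)) * (r - b) - 1 = 0 := by
  let f : ℝ → ℝ := fun r => (∏ i, (r - a i)) * (r - b) - 1
  have hf : Continuous f := by fun_prop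
  have hj0 : f (a j) = -1 := by
    have : ∏ i, ((a j : ℝ) - a i) = 0 := Finset.prod_eq_zero (Finset.mem_univ j) (sub_self _)
    simp [f, this]
  have hB : 0 ≤ f (|(a j : ℝ)| + |(b : ℝ)| + 1) := by
    have h1 : 1 ≤ ∏ i, ((|(a j : ℝ)| + |(b : ℝ)| + 1) - a i) := by
      refine le_of_eq_of_le (Finset.prod_const_one (s := (Finset.univ : Finset ι))).symm
        (Finset.prod_le_prod (fun _ _ => zero_le_one) ?_)
      intro i _
      have : (a i : ℝ) ≤ a j := by exact_mod_cast hj i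
      have := le_abs_self (a j : ℝ)
      have := abs_nonneg (b : ℝ)
      linarith
    have h2 : 1 ≤ (|(a j : ℝ)| + |(b : ℝ)| + 1) - b := by
      have := le_abs_self (b : ℝ)
      have := abs_nonneg (a j : ℝ)
      linarith
    have := one_le_mul_of_one_le_of_one_le h1 h2
    simp only [f]; linarith
  have hle : (a j : ℝ) ≤ |(a j : ℝ)| + |(b : ℝ)| + 1 := by
    have := le_abs_self (a j : ℝ)
    have := abs_nonneg (b : ℝ)
    linarith
  obtain ⟨r, hr, hr0⟩ := intermediate_value_Icc hle hf.continuousOn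
    (show (0:ℝ) ∈ Set.Icc _ _ from ⟨by rw [hj0]; norm_num, hB⟩)
  refine ⟨r, lt_of_le_of_ne hr.1 ?_, hr0⟩
  rintro rfl
  rw [hj0] at hr0; norm_num at hr0

lemma root_left {ι : Type*} [Fintype ι] (a : ι → ℤ) (b : ℤ) (j : ι) (hj : ∀ i, a j ≤ a i)
    (hodd : Odd (Fintype.card ι)) :
    ∃ r : ℝ, r < (a j : ℝ) ∧ (∏ i, (r - a i)) * (r - b) - 1 = 0 := by
  obtain ⟨r, hr, h⟩ := root_right (fun i => - a i) (-b) j (by intro i; simpa using hj i)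
  refine ⟨-r, by push_cast at hr; linarith, ?_⟩
  have : ∏ i, (-r - (a i : ℝ)) = - ∏ i, (r - ((-a i : ℤ) : ℝ)) := by
    rw [show (∏ i, (-r - (a i : ℝ))) = ∏ i, (-1) * (r - ((-a i : ℤ) : ℝ)) from
      Finset.prod_congr rfl (fun i _ => by push_cast; ring), Finset.prod_mul_distrib]
    simp [hodd.neg_one_pow]
  rw [this]
  push_cast at h ⊢
  linear_combination h

lemma sign_aux {K : Type*} [Field K] [Algebra ℚ K] {n ℓ : ℕ} (hn : 3 ≤ n)
    (a : Fin (n - 1) → ℤ) (hne : ∀ i, a i ≠ 0) (b τ : ℤ)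
    (hF0 : (∏ i, (0 - a i)) * (0 - b) - 1 = -τ ^ ℓ) (hτ : τ ≠ 0) (ξ : K)
    (hfd : Algebra.norm ℚ (-1 : K) = (-1) ^ n)
    (hnorm : ∀ c : ℤ, Algebra.norm ℚ (ξ - (c : K)) =
      (-1) ^ n * (((∏ i, (c - a i)) * (c - b) - 1 : ℤ) : ℚ))
    (hreal : ∀ r : ℝ, (∏ i, (r - a i)) * (r - b) - 1 = 0 → ∃ φ : K →+* ℝ, φ ξ = r)
    (α : K) (M ν : ℕ) (es : Fin (n - 1) → ℕ) (hM : Even M) (hE : Even (ℓ * ν)) :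
    α ^ M ≠ -(ξ ^ ν * ∏ i, (ξ - (a i : K)) ^ es i) := by
  intro h
  have : Nonempty (Fin (n - 1)) := ⟨⟨0, by omega⟩⟩
  have hφ : ∀ φ : K →+* ℝ, φ ξ ^ ν * ∏ i, (φ ξ - (a i : ℝ)) ^ es i ≤ 0 := by
    intro φ
    have := congrArg φ h
    simp only [map_pow, map_neg, map_mul, map_prod, map_sub, map_intCast] at this
    have h2 := hM.pow_nonneg (φ α)
    linarith
  obtain ⟨j, hj⟩ := Finite.exists_max a
  by_cases hjp : 0 < a j
  · obtain ⟨r, hr, hr0⟩ := root_right a b j hj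
    obtain ⟨φ, hφr⟩ := hreal r hr0
    have h1 := hφ φ
    rw [hφr] at h1
    have hjp' : (0 : ℝ) < a j := by exact_mod_cast hjp
    have : 0 < r ^ ν * ∏ i, (r - (a i : ℝ)) ^ es i := by
      apply mul_pos (pow_pos (by linarith) _)
      apply Finset.prod_pos
      intro i _
      apply pow_pos
      have : (a i : ℝ) ≤ a j := by exact_mod_cast hj i
      linarith
    linarith
  have hneg : ∀ i, a i < 0 := fun i =>
    lt_of_le_of_ne ((hj i).trans (not_lt.1 hjp)) (hne i)
  have hN := congrArg (Algebra.norm ℚ) h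
  have hξ : Algebra.norm ℚ ξ = (-1) ^ n * (-τ ^ ℓ) := by
    have := hnorm 0
    rw [hF0] at this
    simpa using this
  have hξa : ∀ i, Algebra.norm ℚ (ξ - (a i : K)) = (-1) ^ n * (-1) := by
    intro i
    rw [hnorm, Finset.prod_eq_zero (Finset.mem_univ i) (sub_self _)]
    simp
  have hpos : 0 < (τ : ℚ) ^ (ℓ * ν) := hE.pow_pos (by exact_mod_cast hτ)
  rw [neg_eq_neg_one_mul] at hN
  simp only [map_mul, map_pow, map_prod, hfd, hξ, hξa] at hN
  have hN0 := hM.pow_nonneg (Algebra.norm ℚ α)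
  rw [hN] at hN0
  rcases Nat.even_or_odd n with he | ho
  · rw [he.neg_one_pow] at hN0
    simp only [one_mul] at hN0
    obtain ⟨k, hk⟩ := Finite.exists_min a
    obtain ⟨r, hr, hr0⟩ := root_left a b k hk (by
      rw [Fintype.card_fin]; obtain ⟨t, ht⟩ := he; exact ⟨t - 1, by omega⟩)
    obtain ⟨φ, hφr⟩ := hreal r hr0
    have h1 := hφ φ
    rw [hφr] at h1
    have hkn : (a k : ℝ) < 0 := by exact_mod_cast hneg k
    have hp : 0 < (-r) ^ ν * ∏ i, ((a i : ℝ) - r) ^ es i := by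
      apply mul_pos (pow_pos (by linarith) _)
      apply Finset.prod_pos
      intro i _
      apply pow_pos
      have : (a k : ℝ) ≤ a i := by exact_mod_cast hk i
      linarith
    have e1 : r ^ ν * ∏ i, (r - (a i : ℝ)) ^ es i =
        ((-1) ^ ν * ∏ i, (-1 : ℝ) ^ es i) * ((-r) ^ ν * ∏ i, ((a i : ℝ) - r) ^ es i) := by
      rw [mul_mul_mul_comm, ← mul_pow, ← Finset.prod_mul_distrib]
      congr 1
      · congr 1; ring
      · refine Finset.prod_congr rfl fun i _ => ?_
        rw [← mul_pow]; congr 1; ring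
    rw [neg_eq_neg_one_mul, mul_pow, ← pow_mul] at hN0
    rw [Finset.prod_pow_eq_pow_sum, ← pow_add] at e1
    rw [Finset.prod_pow_eq_pow_sum, mul_right_comm, ← pow_add] at hN0
    rcases neg_one_pow_eq_or ℝ (ν + ∑ i, es i) with h3 | h3
    · rw [h3] at e1; linarith
    · have h4 : (-1 : ℚ) ^ (ν + ∑ i, es i) = -1 := by exact_mod_cast h3
      rw [h4] at hN0; linarith
  · rw [ho.neg_one_pow] at hN0
    simp [← pow_mul] at hN0
    linarith

lemma degree_aux {K : Type*} [Field K] (m : ℕ) (hm : 0 < m) (β : K) (ζ : AlgebraicClosure K)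
    (hζ : ζ ^ m = algebraMap K (AlgebraicClosure K) β) :
    Module.finrank K (IntermediateField.adjoin K {ζ}) ≤ m := by
  rw [IntermediateField.adjoin.finrank (Algebra.IsIntegral.isIntegral ζ)]
  have h := natDegree_le_of_dvd (minpoly.dvd K ζ (p := X ^ m - C β) (by simp [hζ]))
    (X_pow_sub_C_ne_zero hm β)
  rwa [natDegree_X_pow_sub_C] at h

lemma closure_aux (n ℓ : ℕ) (a : Fin (n - 1) → ℤ) (τ : ℤ)
    [Fact (Irreducible (specPolyQ n ℓ a τ))]
    (h0 : ∀ i, AdjoinRoot.root (specPolyQ n ℓ a τ) - (a i : AdjoinRoot (specPolyQ n ℓ a τ)) ≠ 0)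
    (u : (𝓞 (AdjoinRoot (specPolyQ n ℓ a τ)))ˣ) (hu : u ∈ abcUnitSubgroup n ℓ a τ) :
    ∃ (s : AdjoinRoot (specPolyQ n ℓ a τ)) (e : Fin (n - 1) → ℤ), (s = 1 ∨ s = -1) ∧
      algebraMap (𝓞 (AdjoinRoot (specPolyQ n ℓ a τ))) (AdjoinRoot (specPolyQ n ℓ a τ)) ↑u =
        s * ∏ i, (AdjoinRoot.root (specPolyQ n ℓ a τ) - (a i : AdjoinRoot (specPolyQ n ℓ a τ)))
          ^ (e i) := by
  unfold abcUnitSubgroup at hu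
  induction hu using Subgroup.closure_induction with
  | mem x hx =>
    rcases hx with hx | ⟨i, hi⟩
    · exact ⟨-1, 0, Or.inr rfl, by simp [hx]⟩
    · refine ⟨1, Pi.single i 1, Or.inl rfl, ?_⟩
      rw [hi, Finset.prod_eq_single i]
      · simp
      · intro j _ hj; simp [hj]
      · simp
  | one => exact ⟨1, 0, Or.inl rfl, by simp⟩
  | mul x y _ _ hx hy =>
    obtain ⟨s, e, hs, h⟩ := hx
    obtain ⟨s', e', hs', h'⟩ := hy
    refine ⟨s * s', e + e', ?_, ?_⟩
    · rcases hs with rfl | rfl <;> rcases hs' with rfl | rfl <;> simp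
    · rw [Units.val_mul, map_mul, h, h', mul_mul_mul_comm, ← Finset.prod_mul_distrib]
      congr 1
      exact Finset.prod_congr rfl fun i _ => by rw [Pi.add_apply, zpow_add₀ (h0 i)]
  | inv x _ hx =>
    obtain ⟨s, e, hs, h⟩ := hx
    refine ⟨s, -e, hs, ?_⟩
    have hss : s⁻¹ = s := by
      apply inv_eq_of_mul_eq_one_left
      rcases hs with h | h <;> rw [h] <;> ring
    have hinv : algebraMap (𝓞 (AdjoinRoot (specPolyQ n ℓ a τ))) (AdjoinRoot (specPolyQ n ℓ a τ))
        ↑x⁻¹ = (algebraMap (𝓞 (AdjoinRoot (specPolyQ n ℓ a τ)))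
          (AdjoinRoot (specPolyQ n ℓ a τ)) ↑x)⁻¹ :=
      eq_inv_of_mul_eq_one_left (by rw [← map_mul, Units.inv_mul, map_one])
    rw [hinv, h, mul_inv, hss, ← Finset.prod_inv_distrib]
    congr 1
    exact Finset.prod_congr rfl fun i _ => by rw [Pi.neg_apply, zpow_neg]

/-- The integral model. -/
noncomputable def specZ (n ℓ : ℕ) (a : Fin (n - 1) → ℤ) (τ : ℤ) : ℤ[X] :=
  (∏ i, (X - C (a i))) * (X - C (aTau n ℓ a τ)) - 1

lemma specZ_map (n ℓ : ℕ) (a : Fin (n - 1) → ℤ) (τ : ℤ) :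
    (specZ n ℓ a τ).map (Int.castRingHom ℚ) = specPolyQ n ℓ a τ := by
  simp [specZ, specPolyQ, Polynomial.map_prod]

lemma specZ_monic (n ℓ : ℕ) (hn : 3 ≤ n) (a : Fin (n - 1) → ℤ) (τ : ℤ) :
    (specZ n ℓ a τ).Monic ∧ (specZ n ℓ a τ).natDegree = n := by
  have hm : (∏ i, (X - C (a i))).Monic := monic_prod_of_monic _ _ fun i _ => monic_X_sub_C _
  have hm2 := hm.mul (monic_X_sub_C (aTau n ℓ a τ))
  have hd : ((∏ i, (X - C (a i))) * (X - C (aTau n ℓ a τ))).natDegree = n := by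
    rw [hm.natDegree_mul (monic_X_sub_C _), natDegree_prod_of_monic _ _
      (fun i _ => monic_X_sub_C _)]
    simp only [natDegree_X_sub_C, Finset.sum_const, Finset.card_univ, Fintype.card_fin,
      smul_eq_mul]
    omega
  have hlt : (1 : ℤ[X]).degree < ((∏ i, (X - C (a i))) * (X - C (aTau n ℓ a τ))).degree := by
    rw [degree_one, degree_eq_natDegree hm2.ne_zero, hd]
    exact_mod_cast (by omega : 0 < n)
  refine ⟨hm2.sub_of_left hlt, ?_⟩
  unfold specZ
  rw [natDegree_sub_eq_left_of_natDegree_lt (by rw [hd, natDegree_one]; omega), hd]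

lemma aTau_mul (n ℓ : ℕ) (a : Fin (n - 1) → ℤ) (τ : ℤ) (h : (∏ i, a i) ∣ (τ - 1)) :
    aTau n ℓ a τ * ∏ i, a i = (-1) ^ (n - 1) * (τ ^ ℓ - 1) := by
  have : (∏ i, a i) ∣ τ ^ ℓ - 1 := h.trans (sub_one_dvd_pow_sub_one τ ℓ)
  rw [aTau, mul_assoc, Int.ediv_mul_cancel this]

lemma prod_neg_aux {n : ℕ} (a : Fin (n - 1) → ℤ) :
    ∏ i, (0 - a i) = (-1) ^ (n - 1) * ∏ i, a i := by
  simp [Finset.prod_neg]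

lemma eval0_aux (n ℓ : ℕ) (a : Fin (n - 1) → ℤ) (τ : ℤ) (h : (∏ i, a i) ∣ (τ - 1)) :
    (∏ i, (0 - a i)) * (0 - aTau n ℓ a τ) - 1 = -τ ^ ℓ := by
  rw [prod_neg_aux]
  have h1 := aTau_mul n ℓ a τ h
  have h2 : ((-1 : ℤ) ^ (n - 1)) * (-1) ^ (n - 1) = 1 := by
    rw [← mul_pow]; simp
  linear_combination (-(-1 : ℤ) ^ (n - 1)) * h1 - (τ ^ ℓ - 1) * h2

lemma coeff1_aux (n ℓ : ℕ) (hℓ : 1 ≤ ℓ) (a : Fin (n - 1) → ℤ) (hne : ∀ i, a i ≠ 0) (τ : ℤ)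
    (h : (∏ i, a i) ∣ (τ - 1))
    (hD : ∀ Dz : ℤ, (Dz : ℚ) = (∏ i, ((a i : ℤ) : ℚ)) *
        ((mainPolyZero n ℓ a).derivative.eval 0) → Int.gcd τ Dz = 1) :
    IsCoprime τ ((specZ n ℓ a τ).coeff 1) := by
  set P : ℤ[X] := ∏ i, (X - C (a i)) with hP
  set A : ℤ := ∏ i, a i with hA
  have hA0 : (A : ℚ) ≠ 0 := by
    exact_mod_cast Finset.prod_ne_zero_iff.2 fun i _ => hne i
  have hc : (specZ n ℓ a τ).coeff 1 = P.derivative.eval 0 * (-aTau n ℓ a τ) + P.eval 0 := by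
    have : (specZ n ℓ a τ).coeff 1 = (specZ n ℓ a τ).derivative.eval 0 := by
      rw [← coeff_zero_eq_eval_zero, coeff_derivative]; simp
    rw [this, specZ, ← hP]
    simp
  have hPQ : (∏ i, (X - C ((a i : ℤ) : ℚ))) = P.map (Int.castRingHom ℚ) := by
    simp [hP, Polynomial.map_prod]
  have e1 : (P.map (Int.castRingHom ℚ)).eval 0 = ((P.eval 0 : ℤ) : ℚ) := by
    simpa using eval_intCast_map (Int.castRingHom ℚ) P 0
  have e2 : (P.map (Int.castRingHom ℚ)).derivative.eval 0 = ((P.derivative.eval 0 : ℤ) : ℚ) := by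
    rw [derivative_map]
    simpa using eval_intCast_map (Int.castRingHom ℚ) P.derivative 0
  have h1 := hD ((-1) ^ (n - 1) * P.derivative.eval 0 + A * P.eval 0) (by
    unfold mainPolyZero
    rw [hPQ, ← hA]
    simp only [derivative_sub, derivative_mul, derivative_one, derivative_X, derivative_C,
      eval_sub, eval_add, eval_mul, eval_X, eval_C, eval_one, eval_zero, e1, e2]
    rw [zero_pow (by omega), show (∏ i, ((a i : ℤ) : ℚ)) = (A : ℚ) by simp [hA]]
    push_cast
    field_simp
    ring)
  have h2 : IsCoprime τ ((-1) ^ (n - 1) * P.derivative.eval 0 + A * P.eval 0) :=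
    Int.isCoprime_iff_gcd_eq_one.2 h1
  have h3 := aTau_mul n ℓ a τ h
  obtain ⟨u, v, huv⟩ := h2
  obtain ⟨k, rfl⟩ : ∃ k, ℓ = k + 1 := ⟨ℓ - 1, by omega⟩
  refine ⟨u + v * (-1) ^ (n - 1) * P.derivative.eval 0 * τ ^ k, v * A, ?_⟩
  rw [hc]
  rw [← hA] at h3
  linear_combination huv - v * P.derivative.eval 0 * h3

lemma norm_facts (p : ℚ[X]) [Fact (Irreducible p)] (hp : p.Monic) :
    ∃ A : Algebra ℚ (AdjoinRoot p), Algebra.norm ℚ (-1 : AdjoinRoot p) = (-1) ^ p.natDegree ∧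
      ∀ c : ℤ, Algebra.norm ℚ (AdjoinRoot.root p - (c : AdjoinRoot p)) =
        (-1) ^ p.natDegree * p.eval (c : ℚ) := by
  have hirr : Irreducible p := Fact.out
  let A : Algebra ℚ (AdjoinRoot p) := AdjoinRoot.instAlgebra p
  let pb : PowerBasis ℚ (AdjoinRoot p) := AdjoinRoot.powerBasis hirr.ne_zero
  have hdim : pb.dim = p.natDegree := AdjoinRoot.powerBasis_dim _
  have hmin : minpoly ℚ pb.gen = p := by
    have h := AdjoinRoot.minpoly_root hirr.ne_zero
    rw [hp.leadingCoeff, inv_one, C_1, mul_one] at h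
    exact h
  refine ⟨A, ?_, ?_⟩
  · rw [show (-1 : AdjoinRoot p) = algebraMap ℚ (AdjoinRoot p) (-1) by simp,
      Algebra.norm_algebraMap_of_basis pb.basis, Fintype.card_fin, hdim]
  · intro c
    have h1 := norm_aux pb (c : ℚ)
    rw [hmin, hdim, map_intCast] at h1
    exact h1

/-- **Proposition 7.1.**  Let `(N, T₀)` be an admissible pair and let `τ` be a
suitable integer with respect to `(N, T₀)`.  Then the ideal class group of the field
`K_{a(τ)} = ℚ[x]/(f(τ,x))` contains an element of order exactly `ℓ`. -/
theorem class_group_element_of_suitable (n ℓ : ℕ) (hn : 3 ≤ n) (hℓ : 1 ≤ ℓ)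
    (a : Fin (n - 1) → ℤ) (hinj : Function.Injective a) (hne : ∀ i, a i ≠ 0)
    (hsep : (mainPoly n ℓ a).Separable)
    (hGal : Nonempty ((mainPoly n ℓ a).Gal ≃* Equiv.Perm (Fin n)))
    (hsep0 : (mainPolyZero n ℓ a).Separable)
    (N T₀ : ℕ) (hadm : Admissible n ℓ a N T₀)
    (τ : ℤ) (hτ : Suitable n ℓ a N T₀ τ)
    [Fact (Irreducible (specPolyQ n ℓ a τ))] :
    ∃ C : ClassGroup (𝓞 (AdjoinRoot (specPolyQ n ℓ a τ))), orderOf C = ℓ := by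
  obtain ⟨hN, hT, hadm⟩ := hadm
  obtain ⟨hτ1, hτ2, hτ3, hτ4, hτ5⟩ := hτ
  obtain ⟨hdisc, hsuit⟩ := hτ5
  obtain ⟨hi0, hiN⟩ := hadm τ hτ1 hτ2 hτ4 hdisc
  obtain ⟨hmon, hdeg⟩ := specZ_monic n ℓ hn a τ
  have hpmap := specZ_map n ℓ a τ
  have hpmon : (specPolyQ n ℓ a τ).Monic := by rw [← hpmap]; exact hmon.map _
  have hpdeg : (specPolyQ n ℓ a τ).natDegree = n := by rw [← hpmap, hmon.natDegree_map, hdeg]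
  set ξ : AdjoinRoot (specPolyQ n ℓ a τ) := AdjoinRoot.root (specPolyQ n ℓ a τ) with hξ
  have hξc : ∀ c : ℤ, ξ - (c : AdjoinRoot (specPolyQ n ℓ a τ)) ≠ 0 := by
    intro c hc
    have h1 : AdjoinRoot.mk (specPolyQ n ℓ a τ) (X - C (c : ℚ)) = 0 := by
      rw [map_sub, AdjoinRoot.mk_X, AdjoinRoot.mk_C, map_intCast]; exact hc
    rw [AdjoinRoot.mk_eq_zero] at h1
    have h2 := natDegree_le_of_dvd h1 (X_sub_C_ne_zero _)
    rw [hpdeg, natDegree_X_sub_C] at h2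
    omega
  have hξa : ∀ i, ξ - (a i : AdjoinRoot (specPolyQ n ℓ a τ)) ≠ 0 := fun i => hξc (a i)
  have hξ0 : ξ ≠ 0 := by simpa using hξc 0
  have hξF : aeval ξ (specZ n ℓ a τ) = 0 := by
    have h1 := AdjoinRoot.eval₂_root (specPolyQ n ℓ a τ)
    have h2 : eval₂ (AdjoinRoot.of (specPolyQ n ℓ a τ)) ξ ((specZ n ℓ a τ).map (Int.castRingHom ℚ)) = 0 := by
      rw [hpmap]; exact h1
    rw [eval₂_map] at h2
    rw [aeval_def, ← h2]
    congr 1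
  have hint : IsIntegral ℤ ξ := ⟨specZ n ℓ a τ, hmon, by rwa [← aeval_def]⟩
  let x : 𝓞 (AdjoinRoot (specPolyQ n ℓ a τ)) := ⟨ξ, hint⟩
  have hxξ : algebraMap (𝓞 (AdjoinRoot (specPolyQ n ℓ a τ))) (AdjoinRoot (specPolyQ n ℓ a τ)) x = ξ := rfl
  have hinjO : Function.Injective (algebraMap (𝓞 (AdjoinRoot (specPolyQ n ℓ a τ))) (AdjoinRoot (specPolyQ n ℓ a τ))) :=
    RingOfIntegers.coe_injective
  have hx0 : x ≠ 0 := by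
    intro h; apply hξ0; rw [← hxξ, h, map_zero]
  have hxF : aeval x (specZ n ℓ a τ) = 0 := by
    apply hinjO
    rw [map_zero, ← aeval_algebraMap_apply, hxξ, hξF]
  have hF0 := eval0_aux n ℓ a τ hτ2
  have hcoeff0 : (specZ n ℓ a τ).coeff 0 = -τ ^ ℓ := by
    rw [coeff_zero_eq_eval_zero, ← hF0, specZ]
    simp [eval_prod]
  have hcop := coeff1_aux n ℓ hℓ a hne τ hτ2 hτ3
  obtain ⟨I, hI⟩ := ideal_pow_aux (specZ n ℓ a τ) x hxF τ ℓ hcoeff0 hcop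
  rcases class_aux x hx0 ℓ hℓ I hI with h | ⟨m, k, α, u, hm0, hmℓ, hmk, hα⟩
  · exact h
  exfalso
  have hτ0 : τ ≠ 0 := by
    intro hτz
    have h1 : (specPolyQ n ℓ a τ).coeff 0 = 0 := by
      rw [← hpmap, coeff_map, hcoeff0, hτz, zero_pow (by omega)]
      simp
    have h2 : X ∣ (specPolyQ n ℓ a τ) := X_dvd_iff.2 h1
    have h3 := (Fact.out : Irreducible (specPolyQ n ℓ a τ)).dvd_iff.1 h2
    rcases h3 with h3 | h3
    · exact not_isUnit_X h3
    · have := natDegree_eq_of_degree_eq (degree_eq_degree_of_associated h3)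
      rw [hpdeg, natDegree_X] at this
      omega
  set ν := (abcUnitSubgroup n ℓ a τ).index with hν
  obtain ⟨s, e, hs, hue⟩ := closure_aux n ℓ a τ hξa (u ^ ν)
    ((abcUnitSubgroup n ℓ a τ).pow_index_mem u)
  rw [← hξ] at hue
  have hν1 : 1 ≤ ν := Nat.pos_of_ne_zero hi0
  set α' : AdjoinRoot (specPolyQ n ℓ a τ) := algebraMap (𝓞 (AdjoinRoot (specPolyQ n ℓ a τ))) (AdjoinRoot (specPolyQ n ℓ a τ)) α with hα'
  have hαk : α' ^ (k * ν) = ξ ^ ν * (s * ∏ i, (ξ - (a i : AdjoinRoot (specPolyQ n ℓ a τ))) ^ (e i)) := by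
    rw [← hue, hα', ← map_pow, pow_mul, hα, mul_pow, map_mul, map_pow, hxξ, Units.val_pow_eq_pow_val]
  set L : ℤ := (ν : ℤ) * ℓ with hL
  have hLpos : 0 < L := by positivity
  set γ : AdjoinRoot (specPolyQ n ℓ a τ) := ∏ i, (ξ - (a i : AdjoinRoot (specPolyQ n ℓ a τ))) ^ (-(e i / L)) with hγ
  set es : Fin (n - 1) → ℕ := fun i => (e i % L).toNat with hes
  have hesc : ∀ i, ((es i : ℕ) : ℤ) = e i % L := fun i =>
    Int.toNat_of_nonneg (Int.emod_nonneg _ hLpos.ne')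
  have heslt : ∀ i, es i < ν * ℓ := by
    intro i
    have h1 := Int.emod_lt_of_pos (e i) hLpos
    rw [← hesc, hL] at h1
    exact_mod_cast h1
  have hβ : (α' * γ ^ m) ^ (k * ν) = s * (ξ ^ ν * ∏ i, (ξ - (a i : AdjoinRoot (specPolyQ n ℓ a τ))) ^ es i) := by
    have hprod : (∏ i, (ξ - (a i : AdjoinRoot (specPolyQ n ℓ a τ))) ^ (e i)) * γ ^ (m * (k * ν)) =
        ∏ i, (ξ - (a i : AdjoinRoot (specPolyQ n ℓ a τ))) ^ es i := by
      rw [hγ, ← Finset.prod_pow, ← Finset.prod_mul_distrib]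
      refine Finset.prod_congr rfl fun i _ => ?_
      rw [← zpow_natCast, ← zpow_mul, ← zpow_add₀ (hξa i), ← zpow_natCast]
      congr 1
      rw [hesc, ← mul_assoc, hmk, Int.emod_def, hL]
      push_cast
      ring
    rw [mul_pow, ← pow_mul, hαk, ← hprod]
    ring
  have hfin : ∃ β : AdjoinRoot (specPolyQ n ℓ a τ),
      β ^ (k * ν) = ξ ^ ν * ∏ i, (ξ - (a i : AdjoinRoot (specPolyQ n ℓ a τ))) ^ es i := by
    rcases hs with rfl | rfl
    · exact ⟨_, hβ.trans (one_mul _)⟩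
    rcases Nat.even_or_odd (k * ν) with hev | hod
    · exfalso
      rw [neg_one_mul] at hβ
      obtain ⟨A, hA1, hA2⟩ := norm_facts (specPolyQ n ℓ a τ) hpmon
      refine @sign_aux _ _ A n ℓ hn a hne (aTau n ℓ a τ) τ hF0 hτ0 ξ ?_ ?_ ?_ _ _ ν es hev ?_ hβ
      · rw [hA1, hpdeg]
      · intro c
        rw [hA2 c, hpdeg]
        simp [specPolyQ, eval_prod]
      · intro r hr
        refine ⟨AdjoinRoot.lift (algebraMap ℚ ℝ) r ?_, AdjoinRoot.lift_root _⟩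
        rw [specPolyQ, ← hr]
        have hprod : eval₂ (algebraMap ℚ ℝ) r (∏ i, (X - C ((a i : ℤ) : ℚ))) = ∏ i, (r - (a i : ℝ)) := by
          rw [← coe_eval₂RingHom, map_prod]
          simp only [coe_eval₂RingHom, eval₂_sub, eval₂_X, eval₂_C]
          simp only [map_intCast]
        rw [eval₂_sub, eval₂_mul, hprod]
        simp only [eval₂_sub, eval₂_X, eval₂_C, eval₂_one]
        simp only [map_intCast]
      · rw [← hmk, mul_assoc]
        exact hev.mul_left m
    · refine ⟨-(α' * γ ^ m), ?_⟩
      rw [hod.neg_pow, hβ]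
      ring
  obtain ⟨β, hβ2⟩ := hfin
  obtain ⟨ζ, hζ⟩ := IsAlgClosed.exists_pow_nat_eq
    (algebraMap (AdjoinRoot (specPolyQ n ℓ a τ)) (AlgebraicClosure (AdjoinRoot (specPolyQ n ℓ a τ))) β) hm0
  have h1 := hsuit ν es hν1 hiN heslt ζ (by
    rw [show ℓ * ν = m * (k * ν) by rw [← mul_assoc, hmk], pow_mul, hζ, ← map_pow, hβ2, map_mul, map_pow, map_prod]
    congr 1
    refine Finset.prod_congr rfl fun i _ => ?_
    rw [map_pow, map_sub, map_intCast])
  have h2 := degree_aux m hm0 β ζ hζ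
  omega
end
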